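/- arXiv:1106.0196 — 8 statements merged into one kernel-verified Lean document; each statement's English description precedes it below -/
import Mathlib

section
/- Let S be a subset of Baire space ℕ^ℕ. Then S is guessable if and only if S is both Fσ (a countable union of closed sets) and Gδ (a countable intersection of open sets); that is, the guessable sets are exactly the Δ⁰₂ sets. (This is the m = 0 case of the paper's main theorem.) -/
/-!
If a predicate on finite sequences decides `S` in the limit, then `S` is both the liminf and the
limsup of the clopen sets of those `f` whose initial segment of length `n` satisfies the predicate.

Conversely, write `S = ⋃ n, F n` and `Sᶜ = ⋃ n, K n` with all sets closed, and search for the least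
index at which one of the two sequences still meets the cylinder of the observed initial segment.
A point lies in some member of one sequence, and its small enough cylinders avoid any given finite
number of members of the other, so the search eventually ends on the correct side.
-/

/-- `G` guesses `S`: for every `f`, the guess `G (f 0, …, f n)` is eventually `1`
if `f ∈ S` and eventually `0` if `f ∉ S`. -/
def Guesses (G : List ℕ → ℕ) (S : Set (ℕ → ℕ)) : Prop :=
  ∀ f : ℕ → ℕ,
    (f ∈ S → ∀ᶠ n in Filter.atTop, G (List.ofFn fun i : Fin (n + 1) => f i) = 1) ∧
    (f ∉ S → ∀ᶠ n in Filter.atTop, G (List.ofFn fun i : Fin (n + 1) => f i) = 0)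

/-- `S` is guessable if some `G` guesses it. -/
def Guessable (S : Set (ℕ → ℕ)) : Prop := ∃ G : List ℕ → ℕ, Guesses G S

open Filter Topology

section PointwiseLimit

variable {X ι : Type*}

theorem liminf_eq_of_eventually_mem_iff {l : Filter ι} [l.NeBot] {A : ι → Set X} {S : Set X}
    (h : ∀ x, ∀ᶠ i in l, (x ∈ A i ↔ x ∈ S)) : liminf A l = S := by
  ext x
  rw [mem_liminf_iff_eventually_mem, eventually_congr (h x), eventually_const]

theorem limsup_eq_of_eventually_mem_iff {l : Filter ι} [l.NeBot] {A : ι → Set X} {S : Set X}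
    (h : ∀ x, ∀ᶠ i in l, (x ∈ A i ↔ x ∈ S)) : limsup A l = S := by
  ext x
  rw [mem_limsup_iff_frequently_mem, frequently_congr (h x), frequently_const]

variable [TopologicalSpace X]

theorem exists_isClosed_liminf_eq_iUnion {A : ℕ → Set X} (hA : ∀ n, IsClosed (A n)) :
    ∃ F : ℕ → Set X, (∀ n, IsClosed (F n)) ∧ liminf A atTop = ⋃ n, F n :=
  ⟨fun n => ⋂ i ≥ n, A i, fun _ => isClosed_biInter fun i _ => hA i, liminf_eq_iSup_iInf_of_nat⟩

theorem exists_isOpen_limsup_eq_iInter {A : ℕ → Set X} (hA : ∀ n, IsOpen (A n)) :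
    ∃ U : ℕ → Set X, (∀ n, IsOpen (U n)) ∧ limsup A atTop = ⋂ n, U n :=
  ⟨fun n => ⋃ i ≥ n, A i, fun _ => isOpen_biUnion fun i _ => hA i, limsup_eq_iInf_iSup_of_nat⟩

end PointwiseLimit

section MeetsBefore

variable {X : Type*}

/-- `V` meets some member of the sequence `F` while still being disjoint from all earlier members
of `K`. When `F` covers a set and `K` its complement, this is the guess that the point located by
the neighbourhood `V` lies in the set. -/
def MeetsBefore (F K : ℕ → Set X) (V : Set X) : Prop :=
  ∃ n, (F n ∩ V).Nonempty ∧ ∀ i < n, Disjoint (K i) V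

variable [TopologicalSpace X] {F K : ℕ → Set X} {x : X}

theorem eventually_smallSets_disjoint_of_isClosed {A : Set X} (hA : IsClosed A) (hx : x ∉ A) :
    ∀ᶠ V in (𝓝 x).smallSets, Disjoint A V :=
  eventually_smallSets.2
    ⟨Aᶜ, hA.isOpen_compl.mem_nhds hx, fun _ hV => disjoint_compl_right.mono_right hV⟩

theorem eventually_smallSets_meetsBefore (hK : ∀ n, IsClosed (K n))
    (hxF : x ∈ ⋃ n, F n) (hxK : x ∉ ⋃ n, K n) :
    ∀ᶠ V in (𝓝 x).smallSets, x ∈ V → MeetsBefore F K V := by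
  obtain ⟨n, hn⟩ := Set.mem_iUnion.1 hxF
  have hdisj : ∀ᶠ V in (𝓝 x).smallSets, ∀ i ∈ Set.Iio n, Disjoint (K i) V :=
    (eventually_all_finite (Set.finite_Iio n)).2 fun i _ =>
      eventually_smallSets_disjoint_of_isClosed (hK i) fun hi => hxK (Set.mem_iUnion_of_mem i hi)
  filter_upwards [hdisj] with V hV hxV
  exact ⟨n, ⟨x, hn, hxV⟩, hV⟩

theorem eventually_smallSets_not_meetsBefore (hF : ∀ n, IsClosed (F n))
    (hxF : x ∉ ⋃ n, F n) (hxK : x ∈ ⋃ n, K n) :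
    ∀ᶠ V in (𝓝 x).smallSets, x ∈ V → ¬ MeetsBefore F K V := by
  obtain ⟨n, hn⟩ := Set.mem_iUnion.1 hxK
  have hdisj : ∀ᶠ V in (𝓝 x).smallSets, ∀ i ∈ Set.Iic n, Disjoint (F i) V :=
    (eventually_all_finite (Set.finite_Iic n)).2 fun i _ =>
      eventually_smallSets_disjoint_of_isClosed (hF i) fun hi => hxF (Set.mem_iUnion_of_mem i hi)
  filter_upwards [hdisj] with V hV hxV
  rintro ⟨m, hFm, hKm⟩
  have hnm : n < m := not_le.1 fun hmn => Set.not_disjoint_iff_nonempty_inter.2 hFm (hV m hmn)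
  exact Set.disjoint_left.1 (hKm n hnm) hn hxV

theorem eventually_smallSets_meetsBefore_iff {S : Set X} (hF : ∀ n, IsClosed (F n))
    (hK : ∀ n, IsClosed (K n)) (hSF : S = ⋃ n, F n) (hSK : Sᶜ = ⋃ n, K n) (x : X) :
    ∀ᶠ V in (𝓝 x).smallSets, x ∈ V → (MeetsBefore F K V ↔ x ∈ S) := by
  by_cases hx : x ∈ S
  · have hxK : x ∉ ⋃ n, K n := fun h => hSK.superset h hx
    filter_upwards [eventually_smallSets_meetsBefore hK (hSF.subset hx) hxK]
      with V hV hxV using iff_of_true (hV hxV) hx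
  · have hxF : x ∉ ⋃ n, F n := fun h => hx (hSF.superset h)
    filter_upwards [eventually_smallSets_not_meetsBefore hF hxF (hSK.subset hx)]
      with V hV hxV using iff_of_false (hV hxV) hx

end MeetsBefore

theorem tendsto_cylinder_smallSets_nhds {E : ℕ → Type*} [∀ n, TopologicalSpace (E n)]
    [∀ n, DiscreteTopology (E n)] (x : ∀ n, E n) :
    Tendsto (PiNat.cylinder x) atTop (𝓝 x).smallSets := by
  refine tendsto_smallSets_iff.2 fun t ht => ?_
  obtain ⟨n, hn⟩ := PiNat.exists_disjoint_cylinder isOpen_interior.isClosed_compl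
    (Set.notMem_compl_iff.2 (mem_interior_iff_mem_nhds.2 ht))
  filter_upwards [eventually_ge_atTop n] with m hm
  exact ((PiNat.cylinder_anti x hm).trans (Set.disjoint_compl_left_iff_subset.1 hn)).trans
    interior_subset

section DecidesInLimit

variable {α : Type*}

/-- The set of sequences that start with the list `l`: the counterpart of `PiNat.cylinder` for a
finite sequence, through which a guess about a neighbourhood becomes a guess about a list. -/
def prefixCylinder (l : List α) : Set (ℕ → α) :=
  {f | ∀ (i : ℕ) (hi : i < l.length), f i = l[i]}

theorem prefixCylinder_ofFn (f : ℕ → α) (n : ℕ) :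
    prefixCylinder (List.ofFn fun i : Fin n => f i) = PiNat.cylinder f n := by
  ext g
  simp [prefixCylinder, PiNat.mem_cylinder_iff]

/-- The predicate `p` on finite sequences decides membership in `S` in the limit: on the initial
segments of any `f`, its truth value stabilizes to that of `f ∈ S`. This is `Guesses` over an
arbitrary alphabet, with truth values in place of the guesses `1` and `0`. -/
def DecidesInLimit (p : List α → Prop) (S : Set (ℕ → α)) : Prop :=
  ∀ f : ℕ → α, ∀ᶠ n in atTop, (p (List.ofFn fun i : Fin n => f i) ↔ f ∈ S)

variable [TopologicalSpace α] [DiscreteTopology α]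

theorem isClopen_setOf_ofFn (p : List α → Prop) (n : ℕ) :
    IsClopen {f : ℕ → α | p (List.ofFn fun i : Fin n => f i)} :=
  (isClopen_discrete {v : Fin n → α | p (List.ofFn v)}).preimage
    (continuous_pi fun i : Fin n => continuous_apply (i : ℕ))

theorem decidesInLimit_meetsBefore {F K : ℕ → Set (ℕ → α)} {S : Set (ℕ → α)}
    (hF : ∀ n, IsClosed (F n)) (hK : ∀ n, IsClosed (K n))
    (hSF : S = ⋃ n, F n) (hSK : Sᶜ = ⋃ n, K n) :
    DecidesInLimit (fun l => MeetsBefore F K (prefixCylinder l)) S := by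
  intro f
  simp only [prefixCylinder_ofFn]
  filter_upwards [(tendsto_cylinder_smallSets_nhds f).eventually
    (eventually_smallSets_meetsBefore_iff hF hK hSF hSK f)] with n hn
  exact hn (PiNat.self_mem_cylinder f n)

theorem guessable_iff_fsigma_and_gdelta_general (S : Set (ℕ → α)) :
    (∃ p : List α → Prop, DecidesInLimit p S) ↔
      ((∃ F : ℕ → Set (ℕ → α), (∀ n, IsClosed (F n)) ∧ S = ⋃ n, F n) ∧
       (∃ U : ℕ → Set (ℕ → α), (∀ n, IsOpen (U n)) ∧ S = ⋂ n, U n)) := by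
  constructor
  · rintro ⟨p, hp⟩
    have hclopen := isClopen_setOf_ofFn p
    exact ⟨liminf_eq_of_eventually_mem_iff hp ▸
        exists_isClosed_liminf_eq_iUnion fun n => (hclopen n).isClosed,
      limsup_eq_of_eventually_mem_iff hp ▸
        exists_isOpen_limsup_eq_iInter fun n => (hclopen n).isOpen⟩
  · rintro ⟨⟨F, hF, hSF⟩, ⟨U, hU, hSU⟩⟩
    have hSK : Sᶜ = ⋃ n, (U n)ᶜ := by rw [hSU, Set.compl_iInter]
    exact ⟨_, decidesInLimit_meetsBefore hF (fun n => (hU n).isClosed_compl) hSF hSK⟩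

end DecidesInLimit

theorem Guesses.decidesInLimit {G : List ℕ → ℕ} {S : Set (ℕ → ℕ)} (hG : Guesses G S) :
    DecidesInLimit (fun l => G l = 1) S := by
  intro f
  rw [← map_add_atTop_eq_nat 1, eventually_map]
  by_cases hf : f ∈ S
  · filter_upwards [(hG f).1 hf] with n hn using iff_of_true hn hf
  · filter_upwards [(hG f).2 hf] with n hn using iff_of_false (hn ▸ zero_ne_one) hf

open scoped Classical in
theorem DecidesInLimit.guesses {p : List ℕ → Prop} {S : Set (ℕ → ℕ)} (hp : DecidesInLimit p S) :
    Guesses (fun l => if p l then 1 else 0) S := by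
  intro f
  have hev := (tendsto_add_atTop_nat 1).eventually (hp f)
  exact ⟨fun hf => hev.mono fun _ hn => if_pos (hn.2 hf),
    fun hf => hev.mono fun _ hn => if_neg fun h => hf (hn.1 h)⟩

theorem guessable_iff_exists_decidesInLimit (S : Set (ℕ → ℕ)) :
    Guessable S ↔ ∃ p : List ℕ → Prop, DecidesInLimit p S :=
  ⟨fun ⟨_, hG⟩ => ⟨_, hG.decidesInLimit⟩, fun ⟨_, hp⟩ => ⟨_, hp.guesses⟩⟩

/-- The guessable subsets of Baire space are exactly the sets that are both Fσ and Gδ,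
i.e. the Δ⁰₂ sets. -/
theorem guessable_iff_fsigma_and_gdelta (S : Set (ℕ → ℕ)) :
    Guessable S ↔
      ((∃ F : ℕ → Set (ℕ → ℕ), (∀ n, IsClosed (F n)) ∧ S = ⋃ n, F n) ∧
       (∃ U : ℕ → Set (ℕ → ℕ), (∀ n, IsOpen (U n)) ∧ S = ⋂ n, U n)) :=
  (guessable_iff_exists_decidesInLimit S).trans (guessable_iff_fsigma_and_gdelta_general S)
end

section
/- Let S be a subset of Baire space ℕ^ℕ. If S is guessable, then S is a countable union of countable intersections of clopen subsets of ℕ^ℕ, i.e., there is a family (Z_{i,j})_{i,j ∈ ℕ} of clopen sets with S = ⋃_{i∈ℕ} ⋂_{j∈ℕ} Z_{i,j}. -/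
theorem isClopen_setOf_list_ofFn {α : Type*} [TopologicalSpace α] [DiscreteTopology α]
    (P : List α → Prop) (m : ℕ) :
    IsClopen {f : ℕ → α | P (List.ofFn fun i : Fin m => f i)} :=
  have restrict_continuous : Continuous fun (f : ℕ → α) (i : Fin m) => f i := by fun_prop
  (isClopen_discrete {v : Fin m → α | P (List.ofFn v)}).preimage restrict_continuous

theorem exists_isClopen_liminf_eq_iUnion_iInter {X : Type*} [TopologicalSpace X]
    {A : ℕ → Set X} (hA : ∀ n, IsClopen (A n)) :
    ∃ Z : ℕ → ℕ → Set X, (∀ i j, IsClopen (Z i j)) ∧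
      Filter.liminf A Filter.atTop = ⋃ i, ⋂ j, Z i j :=
  ⟨fun i j => A (j + i), fun i j => hA (j + i), Filter.liminf_eq_iSup_iInf_of_nat'⟩

theorem Guesses.mem_iff_eventually_eq_one {G : List ℕ → ℕ} {S : Set (ℕ → ℕ)}
    (hG : Guesses G S) (f : ℕ → ℕ) :
    f ∈ S ↔ ∀ᶠ n in Filter.atTop, G (List.ofFn fun i : Fin (n + 1) => f i) = 1 := by
  refine ⟨(hG f).1, fun h_one => ?_⟩
  by_contra hf
  obtain ⟨n, hn_one, hn_zero⟩ := (h_one.and ((hG f).2 hf)).exists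
  exact one_ne_zero (hn_one.symm.trans hn_zero)

theorem guessable_union_inter_clopen_general {α : Type*} [TopologicalSpace α]
    [DiscreteTopology α] (P : List α → Prop) (S : Set (ℕ → α))
    (hS : ∀ f, f ∈ S ↔ ∀ᶠ n in Filter.atTop, P (List.ofFn fun i : Fin (n + 1) => f i)) :
    ∃ Z : ℕ → ℕ → Set (ℕ → α), (∀ i j, IsClopen (Z i j)) ∧
      S = ⋃ i, ⋂ j, Z i j := by
  let A : ℕ → Set (ℕ → α) := fun n => {f | P (List.ofFn fun i : Fin (n + 1) => f i)}
  have S_eq_liminf : S = Filter.liminf A Filter.atTop := by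
    ext f
    exact (hS f).trans (Filter.mem_liminf_iff_eventually_mem (s := A)).symm
  rw [S_eq_liminf]
  exact exists_isClopen_liminf_eq_iUnion_iInter fun n => isClopen_setOf_list_ofFn P (n + 1)

/-- If `S` is guessable then `S` is a countable union of countable intersections
of clopen sets. -/
theorem guessable_union_inter_clopen (S : Set (ℕ → ℕ)) (hS : Guessable S) :
    ∃ Z : ℕ → ℕ → Set (ℕ → ℕ), (∀ i j, IsClopen (Z i j)) ∧
      S = ⋃ i, ⋂ j, Z i j := by
  obtain ⟨G, hG⟩ := hS
  exact guessable_union_inter_clopen_general (G · = 1) S hG.mem_iff_eventually_eq_one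
end

section
/- Let S be a subset of Baire space ℕ^ℕ. If S is guessable, then S is a countable intersection of countable unions of clopen subsets of ℕ^ℕ, i.e., there is a family (Z_{i,j})_{i,j ∈ ℕ} of clopen sets with S = ⋂_{i∈ℕ} ⋃_{j∈ℕ} Z_{i,j}. -/
/-!
If `G` guesses `S`, then `f ∈ S` exactly when infinitely many of the guesses along `f` are `1`.
A single guess depends on finitely many coordinates, so the set where the `n`-th guess is `1` is
clopen, and `S` is the limsup of these clopen sets.
-/

open Filter

theorem Guesses.mem_iff_frequently {G : List ℕ → ℕ} {S : Set (ℕ → ℕ)} (hG : Guesses G S)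
    (f : ℕ → ℕ) :
    f ∈ S ↔ ∃ᶠ n in atTop, G (List.ofFn fun i : Fin (n + 1) => f i) = 1 := by
  refine ⟨fun hf => ((hG f).1 hf).frequently, fun h_one => ?_⟩
  by_contra hf
  obtain ⟨n, h1, h0⟩ := (h_one.and_eventually ((hG f).2 hf)).exists
  exact one_ne_zero (h1.symm.trans h0)

section Discrete

variable {α : Type*} [TopologicalSpace α] [DiscreteTopology α]

theorem isClopen_preimage_precomp {ι κ : Type*} [Finite ι] (e : ι → κ) (s : Set (ι → α)) :
    IsClopen ((fun f : κ → α => f ∘ e) ⁻¹' s) :=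
  (isClopen_discrete s).preimage (Pi.continuous_precomp e)

theorem guessable_inter_union_clopen_general (P : List α → Prop) (S : Set (ℕ → α))
    (hS : ∀ f, f ∈ S ↔ ∃ᶠ n in atTop, P (List.ofFn fun i : Fin (n + 1) => f i)) :
    ∃ Z : ℕ → ℕ → Set (ℕ → α), (∀ i j, IsClopen (Z i j)) ∧
      S = ⋂ i, ⋃ j, Z i j := by
  let A (n : ℕ) : Set (ℕ → α) := {f | P (List.ofFn fun i : Fin (n + 1) => f i)}
  have isClopen_A (n : ℕ) : IsClopen (A n) :=
    isClopen_preimage_precomp (Fin.val : Fin (n + 1) → ℕ) {v | P (List.ofFn v)}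
  have eq_limsup : S = limsup A atTop := by
    ext f
    simp only [hS, mem_limsup_iff_frequently_mem, A, Set.mem_ofPred_eq]
  exact ⟨fun i j => A (j + i), fun i j => isClopen_A (j + i),
    eq_limsup.trans limsup_eq_iInf_iSup_of_nat'⟩

end Discrete

/-- If `S` is guessable then `S` is a countable intersection of countable unions
of clopen sets. -/
theorem guessable_inter_union_clopen (S : Set (ℕ → ℕ)) (hS : Guessable S) :
    ∃ Z : ℕ → ℕ → Set (ℕ → ℕ), (∀ i j, IsClopen (Z i j)) ∧
      S = ⋂ i, ⋃ j, Z i j := by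
  obtain ⟨G, hG⟩ := hS
  exact guessable_inter_union_clopen_general (G · = 1) S hG.mem_iff_frequently
end

section
/- Let S be a subset of Baire space ℕ^ℕ. Suppose there are families (D_{i,j})_{i,j∈ℕ} and (E_{i,j})_{i,j∈ℕ} of clopen subsets of ℕ^ℕ such that S = ⋃_{i∈ℕ} ⋂_{j∈ℕ} D_{i,j} and S = ⋂_{i∈ℕ} ⋃_{j∈ℕ} E_{i,j}. Then S is clopen-guessable. (This is the m = 1 case of Proposition 10, with Δ⁰₁ sets rendered as clopen sets.) -/
/-- `S` is clopen-guessable: there are a sequence of clopen sets `C n` and a guesser `G`,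
fed the characteristic values `χ_{C 0} f, …, χ_{C n} f`, whose guesses are eventually `1`
when `f ∈ S` and eventually `0` when `f ∉ S`. -/
def ClopenGuessable (S : Set (ℕ → ℕ)) : Prop :=
  ∃ C : ℕ → Set (ℕ → ℕ), (∀ n, IsClopen (C n)) ∧
    ∃ G : List ℕ → ℕ, ∀ f : ℕ → ℕ,
      (f ∈ S → ∀ᶠ n in Filter.atTop,
        G (List.ofFn fun i : Fin (n + 1) => (C i).indicator (fun _ => 1) f) = 1) ∧
      (f ∉ S → ∀ᶠ n in Filter.atTop,
        G (List.ofFn fun i : Fin (n + 1) => (C i).indicator (fun _ => 1) f) = 0)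

/-!
Read `S = ⋃ i, ⋂ j, D i j = ⋂ k, ⋃ j, E k j` as a race. At stage `n`, index `i` is *refuted* if
`x` has left some `D i j` with `j ≤ n`, and index `k` is *witnessed* if `x` has entered some `E k j`
with `j ≤ n`. Guess `x ∈ S` if some unrefuted `i ≤ n` has all `k < i` witnessed.
If `x ∈ S`, some `i` is never refuted and every `k < i` is eventually witnessed. If `x ∉ S`, some
`k` is never witnessed, which confines the guess to the finitely many `i ≤ k`, and each of these is
eventually refuted. Every stage is a finite Boolean combination of clopen sets.
-/

open Filter Set

section FiniteStages

variable {X ι : Type*} [Preorder ι] {s : ι → Set X} {x : X}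

theorem eventually_mem_accumulate (hx : x ∈ ⋃ i, s i) : ∀ᶠ n in atTop, x ∈ accumulate s n := by
  obtain ⟨j, hj⟩ := mem_iUnion.1 hx
  filter_upwards [eventually_ge_atTop j] with n hn
  exact mem_accumulate.2 ⟨j, hn, hj⟩

theorem eventually_notMem_dissipate (hx : x ∉ ⋂ i, s i) :
    ∀ᶠ n in atTop, x ∉ dissipate s n := by
  obtain ⟨j, hj⟩ : ∃ j, x ∉ s j := by simpa only [mem_iInter, not_forall] using hx
  filter_upwards [eventually_ge_atTop j] with n hn hmem
  exact hj (dissipate_subset hn hmem)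

variable [TopologicalSpace X] [LocallyFiniteOrderBot ι]

theorem isClopen_accumulate (hs : ∀ i, IsClopen (s i)) (n : ι) : IsClopen (accumulate s n) :=
  (finite_Iic n).isClopen_biUnion fun i _ => hs i

theorem isClopen_dissipate (hs : ∀ i, IsClopen (s i)) (n : ι) : IsClopen (dissipate s n) :=
  (finite_Iic n).isClopen_biInter fun i _ => hs i

end FiniteStages

section RaceStage

variable {X : Type*} {D E : ℕ → ℕ → Set X} {x : X}

/-- The set guessed at stage `n`: the points for which some index `i ≤ n` is unrefuted and every
`k < i` is witnessed. Both inner indices are cut off at the stage `n` that bounds `i`. -/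
def raceStage (D E : ℕ → ℕ → Set X) (n : ℕ) : Set X :=
  ⋃ i ≤ n, dissipate (D i) n ∩ ⋂ k < i, accumulate (E k) n

theorem mem_raceStage {n : ℕ} :
    x ∈ raceStage D E n ↔
      ∃ i ≤ n, x ∈ dissipate (D i) n ∧ ∀ k < i, x ∈ accumulate (E k) n := by
  simp only [raceStage, mem_iUnion, mem_inter_iff, mem_iInter, exists_prop]

theorem isClopen_raceStage [TopologicalSpace X] (hD : ∀ i j, IsClopen (D i j))
    (hE : ∀ k j, IsClopen (E k j)) (n : ℕ) : IsClopen (raceStage D E n) :=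
  (finite_le_nat n).isClopen_biUnion fun i _ =>
    (isClopen_dissipate (hD i) n).inter <|
      (finite_lt_nat i).isClopen_biInter fun k _ => isClopen_accumulate (hE k) n

theorem eventually_mem_raceStage {i : ℕ} (hD : x ∈ ⋂ j, D i j)
    (hE : ∀ k < i, x ∈ ⋃ j, E k j) : ∀ᶠ n in atTop, x ∈ raceStage D E n := by
  have h_witnessed : ∀ᶠ n in atTop, ∀ k < i, x ∈ accumulate (E k) n :=
    (eventually_all_finite (finite_lt_nat i)).2 fun k hk => eventually_mem_accumulate (hE k hk)
  filter_upwards [eventually_ge_atTop i, h_witnessed] with n hn hw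
  exact mem_raceStage.2 ⟨i, hn, iInter_subset_dissipate n hD, hw⟩

theorem eventually_notMem_raceStage {k : ℕ} (hE : x ∉ ⋃ j, E k j)
    (hD : ∀ i ≤ k, x ∉ ⋂ j, D i j) : ∀ᶠ n in atTop, x ∉ raceStage D E n := by
  have h_refuted : ∀ᶠ n in atTop, ∀ i ≤ k, x ∉ dissipate (D i) n :=
    (eventually_all_finite (finite_le_nat k)).2 fun i hi => eventually_notMem_dissipate (hD i hi)
  filter_upwards [h_refuted] with n hr hx
  obtain ⟨i, -, h_unrefuted, h_witnessed⟩ := mem_raceStage.1 hx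
  have hik : i ≤ k := not_lt.1 fun hki => hE (accumulate_subset_iUnion n (h_witnessed k hki))
  exact hr i hik h_unrefuted

theorem eventually_mem_raceStage_iff (h : ⋃ i, ⋂ j, D i j = ⋂ k, ⋃ j, E k j) (x : X) :
    ∀ᶠ n in atTop, x ∈ raceStage D E n ↔ x ∈ ⋃ i, ⋂ j, D i j := by
  by_cases hx : x ∈ ⋃ i, ⋂ j, D i j
  · obtain ⟨i, hi⟩ := mem_iUnion.1 hx
    have hE : ∀ k, x ∈ ⋃ j, E k j := mem_iInter.1 (h ▸ hx)
    filter_upwards [eventually_mem_raceStage hi fun k _ => hE k] with n hn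
    exact iff_of_true hn hx
  · have hD : ∀ i, x ∉ ⋂ j, D i j := not_exists.1 (mt mem_iUnion.2 hx)
    obtain ⟨k, hk⟩ : ∃ k, x ∉ ⋃ j, E k j := not_forall.1 (mt mem_iInter.2 (h ▸ hx))
    filter_upwards [eventually_notMem_raceStage hk fun i _ => hD i] with n hn
    exact iff_of_false hn hx

end RaceStage

theorem getLastD_ofFn_succ {α : Type*} {n : ℕ} (f : Fin (n + 1) → α) (d : α) :
    (List.ofFn f).getLastD d = f (Fin.last n) := by
  rw [List.ofFn_succ', List.concat_eq_append, List.getLastD_concat]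

theorem ClopenGuessable.of_eventually_mem_iff {S : Set (ℕ → ℕ)} {C : ℕ → Set (ℕ → ℕ)}
    (hC : ∀ n, IsClopen (C n)) (h : ∀ f, ∀ᶠ n in atTop, f ∈ C n ↔ f ∈ S) :
    ClopenGuessable S := by
  refine ⟨C, hC, fun l => l.getLastD 0, fun f => ⟨fun hf => ?_, fun hf => ?_⟩⟩
  all_goals
    filter_upwards [h f] with n hn
    rw [getLastD_ofFn_succ]
  · exact indicator_of_mem (hn.2 hf) _
  · exact indicator_of_notMem (mt hn.1 hf) _

/-- If `S` is a countable union of countable intersections of clopen sets, and also a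
countable intersection of countable unions of clopen sets, then `S` is clopen-guessable. -/
theorem clopenGuessable_of_forms (S : Set (ℕ → ℕ))
    (D E : ℕ → ℕ → Set (ℕ → ℕ))
    (hD : ∀ i j, IsClopen (D i j)) (hE : ∀ i j, IsClopen (E i j))
    (h₁ : S = ⋃ i, ⋂ j, D i j) (h₂ : S = ⋂ i, ⋃ j, E i j) :
    ClopenGuessable S := by
  subst h₁
  exact .of_eventually_mem_iff (isClopen_raceStage hD hE) (eventually_mem_raceStage_iff h₂)
end

section
/- Let S be a subset of Baire space ℕ^ℕ. If S is clopen-guessable, then there are families (X_{i,j})_{i,j∈ℕ} and (Y_{i,j})_{i,j∈ℕ} of clopen subsets of ℕ^ℕ such that S = ⋃_{i∈ℕ} ⋂_{j∈ℕ} X_{i,j} and S = ⋂_{i∈ℕ} ⋃_{j∈ℕ} Y_{i,j}. (This is the m = 1 case of Proposition 11, with Δ⁰₁ sets rendered as clopen sets.) -/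
/-! The guesses after `n` questions are locally constant, so the sets `A n` where the `n`-th guess
is `1` are clopen. The guesses settle correctly at every point, so the sequence `A` converges
pointwise to `S`: its limit inferior `⋃ i, ⋂ j, A (j + i)` and its limit superior
`⋂ i, ⋃ j, A (j + i)` are both `S`. -/

open Filter Set

section SetConvergence

variable {α ι : Type*} {l : Filter ι} [l.NeBot] {A : ι → Set α} {S : Set α}

theorem liminf_eq_of_forall_eventually_mem_iff (h : ∀ x, ∀ᶠ i in l, (x ∈ A i ↔ x ∈ S)) :
    liminf A l = S := by
  ext x
  rw [mem_liminf_iff_eventually_mem, eventually_congr (h x), eventually_const]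

theorem limsup_eq_of_forall_eventually_mem_iff (h : ∀ x, ∀ᶠ i in l, (x ∈ A i ↔ x ∈ S)) :
    limsup A l = S := by
  ext x
  rw [mem_limsup_iff_frequently_mem, frequently_congr (h x), frequently_const]

end SetConvergence

section Topology

variable {α : Type*} [TopologicalSpace α]

theorem isLocallyConstant_pi {ι : Type*} [Finite ι] {Y : ι → Type*} {g : ∀ i, α → Y i}
    (hg : ∀ i, IsLocallyConstant (g i)) : IsLocallyConstant fun x i => g i x := by
  rw [IsLocallyConstant.iff_eventually_eq]
  intro x
  filter_upwards [eventually_all.2 fun i => (hg i).eventually_eq x] with y hy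
  exact funext hy

theorem isLocallyConstant_indicator_const {β : Type*} [Zero β] {U : Set α} (hU : IsClopen U)
    (b : β) : IsLocallyConstant (U.indicator fun _ => b) :=
  ((LocallyConstant.const α b).indicator hU).isLocallyConstant

theorem isLocallyConstant_ofFn_indicator_const {β : Type*} [Zero β] {n : ℕ} {C : Fin n → Set α}
    (hC : ∀ i, IsClopen (C i)) (b : β) :
    IsLocallyConstant fun x => List.ofFn fun i => (C i).indicator (fun _ => b) x :=
  (isLocallyConstant_pi fun i => isLocallyConstant_indicator_const (hC i) b).comp List.ofFn

end Topology

/-- The `n`-th guess at `x` of the guesser `G` for the sequence of sets `C`: the value of `G` at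
the `0`-`1` list recording which of `C 0, …, C n` contain `x`. The list is spelled exactly as in
`ClopenGuessable`, over an arbitrary type in place of `ℕ → ℕ`. -/
noncomputable def guess {α : Type*} (C : ℕ → Set α) (G : List ℕ → ℕ) (n : ℕ) (x : α) : ℕ :=
  G (List.ofFn fun i : Fin (n + 1) => (C i).indicator (fun _ => 1) x)

section Guess

variable {α : Type*} [TopologicalSpace α] {C : ℕ → Set α} {S : Set α} {G : List ℕ → ℕ}

theorem isLocallyConstant_guess (hC : ∀ n, IsClopen (C n)) (G : List ℕ → ℕ) (n : ℕ) :
    IsLocallyConstant (guess C G n) :=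
  (isLocallyConstant_ofFn_indicator_const (fun i : Fin (n + 1) => hC i) 1).comp G

theorem exists_isClopen_forall_eventually_mem_iff (hC : ∀ n, IsClopen (C n))
    (hG : ∀ x, (x ∈ S → ∀ᶠ n in atTop, guess C G n x = 1) ∧
      (x ∉ S → ∀ᶠ n in atTop, guess C G n x = 0)) :
    ∃ A : ℕ → Set α, (∀ n, IsClopen (A n)) ∧ ∀ x, ∀ᶠ n in atTop, (x ∈ A n ↔ x ∈ S) := by
  refine ⟨fun n => {x | guess C G n x = 1},
    fun n => (isLocallyConstant_guess hC G n).isClopen_fiber 1, fun x => ?_⟩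
  by_cases hx : x ∈ S
  · filter_upwards [(hG x).1 hx] with n hn
    exact iff_of_true hn hx
  · filter_upwards [(hG x).2 hx] with n hn
    exact iff_of_false (fun h => zero_ne_one (hn.symm.trans h)) hx

theorem forms_of_clopenGuessable_general (hC : ∀ n, IsClopen (C n))
    (hG : ∀ x, (x ∈ S → ∀ᶠ n in atTop, guess C G n x = 1) ∧
      (x ∉ S → ∀ᶠ n in atTop, guess C G n x = 0)) :
    ∃ X Y : ℕ → ℕ → Set α,
      (∀ i j, IsClopen (X i j)) ∧ (∀ i j, IsClopen (Y i j)) ∧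
      S = ⋃ i, ⋂ j, X i j ∧ S = ⋂ i, ⋃ j, Y i j := by
  obtain ⟨A, hA, hAS⟩ := exists_isClopen_forall_eventually_mem_iff hC hG
  have hinf : S = ⋃ i, ⋂ j, A (j + i) :=
    (liminf_eq_of_forall_eventually_mem_iff hAS).symm.trans liminf_eq_iSup_iInf_of_nat'
  have hsup : S = ⋂ i, ⋃ j, A (j + i) :=
    (limsup_eq_of_forall_eventually_mem_iff hAS).symm.trans limsup_eq_iInf_iSup_of_nat'
  exact ⟨fun i j => A (j + i), fun i j => A (j + i), fun _ _ => hA _, fun _ _ => hA _, hinf, hsup⟩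

end Guess

/-- If `S` is clopen-guessable, then `S` is a countable union of countable intersections
of clopen sets, and also a countable intersection of countable unions of clopen sets. -/
theorem forms_of_clopenGuessable (S : Set (ℕ → ℕ)) (hS : ClopenGuessable S) :
    ∃ X Y : ℕ → ℕ → Set (ℕ → ℕ),
      (∀ i j, IsClopen (X i j)) ∧ (∀ i j, IsClopen (Y i j)) ∧
      S = ⋃ i, ⋂ j, X i j ∧ S = ⋂ i, ⋃ j, Y i j := by
  obtain ⟨C, hC, G, hG⟩ := hS
  exact forms_of_clopenGuessable_general hC hG
end

section
/- Let S be a subset of Baire space ℕ^ℕ. Suppose there are families (D_{i,j})_{i,j∈ℕ} and (E_{i,j})_{i,j∈ℕ} of subsets of ℕ^ℕ, each of which is both Fσ and Gδ, such that S = ⋃_{i∈ℕ} ⋂_{j∈ℕ} D_{i,j} and S = ⋂_{i∈ℕ} ⋃_{j∈ℕ} E_{i,j}. Then S is Δ⁰₂-guessable. (This is the m = 2 case of Proposition 10, with Δ⁰₂ sets rendered as sets that are both Fσ and Gδ.) -/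
/-- `A` is both Fσ (a countable union of closed sets) and Gδ (a countable
intersection of open sets). -/
def IsFsigmaGdelta (A : Set (ℕ → ℕ)) : Prop :=
  (∃ F : ℕ → Set (ℕ → ℕ), (∀ n, IsClosed (F n)) ∧ A = ⋃ n, F n) ∧
  (∃ U : ℕ → Set (ℕ → ℕ), (∀ n, IsOpen (U n)) ∧ A = ⋂ n, U n)

/-- `S` is Δ⁰₂-guessable: there are a sequence of sets `C n`, each both Fσ and Gδ,
and a guesser `G`, fed the characteristic values `χ_{C 0} f, …, χ_{C n} f`, whose
guesses are eventually `1` when `f ∈ S` and eventually `0` when `f ∉ S`. -/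
def Delta2Guessable (S : Set (ℕ → ℕ)) : Prop :=
  ∃ C : ℕ → Set (ℕ → ℕ), (∀ n, IsFsigmaGdelta (C n)) ∧
    ∃ G : List ℕ → ℕ, ∀ f : ℕ → ℕ,
      (f ∈ S → ∀ᶠ n in Filter.atTop,
        G (List.ofFn fun i : Fin (n + 1) => (C i).indicator (fun _ => 1) f) = 1) ∧
      (f ∉ S → ∀ᶠ n in Filter.atTop,
        G (List.ofFn fun i : Fin (n + 1) => (C i).indicator (fun _ => 1) f) = 0)

/-! Suppose `S = ⋃ i, ⋂ j, D i j = ⋂ i, ⋃ j, E i j`. The row `D i` is a potential witness of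
`x ∈ S`, refuted by any `j` with `x ∉ D i j`, and the row `E i` is a potential witness of `x ∉ S`,
refuted by any `j` with `x ∈ E i j`. For each `x`, the rows on one side all get refuted sooner or
later, while the other side has a row which never is. So ask for membership in every `D i j` and
`E i j`, and at each stage guess according to the side having the unrefuted row of least index. -/

open Filter Function Set

/-- Guessability by means of questions `x ∈ C n` with `P (C n)`, for an arbitrary property `P` of
subsets of a type. `Delta2Guessable` is the case `P = IsFsigmaGdelta`; the encoding of answers and
guesses by natural numbers is the same. -/
def GuessableBy {X : Type*} (P : Set X → Prop) (S : Set X) : Prop :=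
  ∃ C : ℕ → Set X, (∀ n, P (C n)) ∧
    ∃ G : List ℕ → ℕ, ∀ x : X,
      (x ∈ S → ∀ᶠ n in atTop,
        G (List.ofFn fun i : Fin (n + 1) => (C i).indicator (fun _ => 1) x) = 1) ∧
      (x ∉ S → ∀ᶠ n in atTop,
        G (List.ofFn fun i : Fin (n + 1) => (C i).indicator (fun _ => 1) x) = 0)

section Competition

variable {α ι : Type*} {l : Filter α} {A B : α → ι → Prop} {i₀ : ι}

theorem eventually_exists_and_forall_le_not [Preorder ι] [LocallyFiniteOrderBot ι]
    (hA : ∀ᶠ a in l, A a i₀) (hB : ∀ k, ∀ᶠ a in l, ¬B a k) :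
    ∀ᶠ a in l, ∃ i, A a i ∧ ∀ k ≤ i, ¬B a k := by
  have hB_le : ∀ᶠ a in l, ∀ k ∈ Iic i₀, ¬B a k :=
    (eventually_all_finite (finite_Iic i₀)).2 fun k _ => hB k
  filter_upwards [hA, hB_le] with a hAa hBa using ⟨i₀, hAa, hBa⟩

theorem eventually_not_exists_and_forall_le_not [LinearOrder ι] [LocallyFiniteOrderBot ι]
    (hA : ∀ i, ∀ᶠ a in l, ¬A a i) (hB : ∀ᶠ a in l, B a i₀) :
    ∀ᶠ a in l, ¬∃ i, A a i ∧ ∀ k ≤ i, ¬B a k := by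
  have hA_le : ∀ᶠ a in l, ∀ i ∈ Iic i₀, ¬A a i :=
    (eventually_all_finite (finite_Iic i₀)).2 fun i _ => hA i
  filter_upwards [hA_le, hB] with a hAa hBa
  rintro ⟨i, hAi, hBi⟩
  rcases le_total i i₀ with hi | hi
  · exact hAa i hi hAi
  · exact hBi i₀ hi hBa

end Competition

section ConstantAlong

variable {α κ : Type*} {a : ℕ → α} {q : κ → ℕ} {b : α}

/-- All entries of the list `L` at positions of the form `q j` equal `b`. Positions beyond the end
of `L` impose no condition: for a list of answers, these questions are still open. -/
def ConstantAlong (L : List α) (q : κ → ℕ) (b : α) : Prop :=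
  ∀ j, ∀ c ∈ L[q j]?, c = b

theorem constantAlong_ofFn_iff {n : ℕ} :
    ConstantAlong (List.ofFn fun i : Fin n => a i) q b ↔ ∀ j, q j < n → a (q j) = b := by
  simp [ConstantAlong, List.getElem?_ofFn]

theorem constantAlong_ofFn_of_forall_eq (h : ∀ j, a (q j) = b) (n : ℕ) :
    ConstantAlong (List.ofFn fun i : Fin n => a i) q b :=
  constantAlong_ofFn_iff.2 fun j _ => h j

theorem eventually_not_constantAlong_ofFn (h : ∃ j, a (q j) ≠ b) :
    ∀ᶠ n in atTop, ¬ConstantAlong (List.ofFn fun i : Fin n => a i) q b := by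
  obtain ⟨j, hj⟩ := h
  filter_upwards [eventually_gt_atTop (q j)] with n hn hconst
  exact hj (constantAlong_ofFn_iff.1 hconst j hn)

end ConstantAlong

section LeastRowGuess

variable {κ κ' : Type*} {d : ℕ → κ → ℕ} {e : ℕ → κ' → ℕ} {a : ℕ → ℕ}

open Classical in
/-- The guess made from the list `L` of answers when the questions about `D i j` and `E i j` are
the ones numbered `d i j` and `e i j`: it is `1` if some row `D i` is unrefuted while all rows
`E k` with `k ≤ i` are refuted, and `0` otherwise. -/
noncomputable def leastRowGuess (d : ℕ → κ → ℕ) (e : ℕ → κ' → ℕ) (L : List ℕ) : ℕ :=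
  if ∃ i, ConstantAlong L (d i) 1 ∧ ∀ k ≤ i, ¬ConstantAlong L (e k) 0 then 1 else 0

theorem eventually_leastRowGuess_eq_one (hd : ∃ i, ∀ j, a (d i j) = 1)
    (he : ∀ i, ∃ j, a (e i j) ≠ 0) :
    ∀ᶠ n in atTop, leastRowGuess d e (List.ofFn fun i : Fin n => a i) = 1 := by
  obtain ⟨i₀, hi₀⟩ := hd
  filter_upwards [eventually_exists_and_forall_le_not
    (A := fun n i => ConstantAlong (List.ofFn fun m : Fin n => a m) (d i) 1)
    (B := fun n k => ConstantAlong (List.ofFn fun m : Fin n => a m) (e k) 0)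
    (Eventually.of_forall (constantAlong_ofFn_of_forall_eq hi₀))
    fun k => eventually_not_constantAlong_ofFn (he k)] with n hn using if_pos hn

theorem eventually_leastRowGuess_eq_zero (hd : ∀ i, ∃ j, a (d i j) ≠ 1)
    (he : ∃ i, ∀ j, a (e i j) = 0) :
    ∀ᶠ n in atTop, leastRowGuess d e (List.ofFn fun i : Fin n => a i) = 0 := by
  obtain ⟨i₀, hi₀⟩ := he
  filter_upwards [eventually_not_exists_and_forall_le_not
    (A := fun n i => ConstantAlong (List.ofFn fun m : Fin n => a m) (d i) 1)
    (B := fun n k => ConstantAlong (List.ofFn fun m : Fin n => a m) (e k) 0)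
    (fun i => eventually_not_constantAlong_ofFn (hd i))
    (Eventually.of_forall (constantAlong_ofFn_of_forall_eq hi₀))] with n hn using if_neg hn

end LeastRowGuess

theorem delta2Guessable_of_forms_general {X : Type*} {P : Set X → Prop} {S : Set X}
    {D E : ℕ → ℕ → Set X} (hD : ∀ i j, P (D i j)) (hE : ∀ i j, P (E i j))
    (h₁ : S = ⋃ i, ⋂ j, D i j) (h₂ : S = ⋂ i, ⋃ j, E i j) :
    GuessableBy P S := by
  obtain ⟨C, hC⟩ : ∃ C : ℕ → Set X, range (uncurry D) ∪ range (uncurry E) = range C :=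
    ((countable_range _).union (countable_range _)).exists_eq_range ⟨D 0 0, .inl ⟨(0, 0), rfl⟩⟩
  have hPC : ∀ n, P (C n) := by
    rw [← forall_mem_range (p := P), ← hC]
    rintro _ (⟨p, rfl⟩ | ⟨p, rfl⟩)
    exacts [hD p.1 p.2, hE p.1 p.2]
  have hDC : ∀ i j, ∃ n, C n = D i j := fun i j => hC.subset (.inl ⟨(i, j), rfl⟩)
  have hEC : ∀ i j, ∃ n, C n = E i j := fun i j => hC.subset (.inr ⟨(i, j), rfl⟩)
  choose d hd using hDC
  choose e he using hEC
  have mem_iff_D : ∀ x, x ∈ S ↔ ∃ i, ∀ j, x ∈ C (d i j) := by simp [h₁, hd]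
  have mem_iff_E : ∀ x, x ∈ S ↔ ∀ i, ∃ j, x ∈ C (e i j) := by simp [h₂, he]
  refine ⟨C, hPC, leastRowGuess d e, fun x => ⟨fun hx => ?_, fun hx => ?_⟩⟩
  · exact (tendsto_add_atTop_nat 1).eventually <|
      eventually_leastRowGuess_eq_one (a := fun n => (C n).indicator (fun _ => 1) x)
        (by simpa using (mem_iff_D x).1 hx) (by simpa using (mem_iff_E x).1 hx)
  · exact (tendsto_add_atTop_nat 1).eventually <|
      eventually_leastRowGuess_eq_zero (a := fun n => (C n).indicator (fun _ => 1) x)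
        (by simpa [mem_iff_D] using hx) (by simpa [mem_iff_E] using hx)

/-- If `S` is a countable union of countable intersections of sets that are both Fσ and Gδ,
and also a countable intersection of countable unions of such sets, then `S` is
Δ⁰₂-guessable. -/
theorem delta2Guessable_of_forms (S : Set (ℕ → ℕ))
    (D E : ℕ → ℕ → Set (ℕ → ℕ))
    (hD : ∀ i j, IsFsigmaGdelta (D i j)) (hE : ∀ i j, IsFsigmaGdelta (E i j))
    (h₁ : S = ⋃ i, ⋂ j, D i j) (h₂ : S = ⋂ i, ⋃ j, E i j) :
    Delta2Guessable S :=
  delta2Guessable_of_forms_general hD hE h₁ h₂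
end

section
/- Let S be a subset of Baire space ℕ^ℕ. Suppose there are families (X_{i,j})_{i,j∈ℕ} and (Y_{i,j})_{i,j∈ℕ} of clopen subsets of ℕ^ℕ such that S = ⋃_{i∈ℕ} ⋂_{j∈ℕ} X_{i,j} and S = ⋂_{i∈ℕ} ⋃_{j∈ℕ} Y_{i,j}. Then there is a single family (Z_{i,j})_{i,j∈ℕ} of clopen subsets of ℕ^ℕ such that S = ⋃_{i∈ℕ} ⋂_{j∈ℕ} Z_{i,j} = ⋂_{i∈ℕ} ⋃_{j∈ℕ} Z_{i,j}. (This is the n = 1 case of the paper's final Corollary, with Δ⁰₁ sets rendered as clopen sets.) -/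
/-!
If `F i n` and `G k n` converge pointwise, as `n → ∞`, to sets `A i` and `B k`, then the sets
`C n` of points that lie in some `F i n` with `i ≤ n` and in all `G k n` with `k ≤ i` satisfy
`(⋃ i, A i) ∩ (⋂ k, B k) ⊆ liminf C` and `limsup C ⊆ (⋃ i, A i) ∪ (⋂ k, B k)`: a point outside
some `B k` can only enter `C n` through the finitely many `F i n` with `i < k`.
Take for `F` and `G` the finite partial intersections of `X` and the finite partial unions of `Y`,
so that both outer sets equal `S`. Then `S = liminf C = limsup C`, and
`Z i j = C (j + i)` realizes both forms because `liminf C = ⋃ i, ⋂ j, C (j + i)` and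
`limsup C = ⋂ i, ⋃ j, C (j + i)`.
-/

open Filter Set

section CompleteLattice

variable {α ι : Type*} [CompleteLattice α] [Preorder ι] {u : ι → α}

theorem iSup_le_liminf_atTop_of_monotone (hu : Monotone u) : ⨆ i, u i ≤ liminf u atTop :=
  iSup_le fun i ↦ le_liminf_of_le (h := (eventually_ge_atTop i).mono fun _ hij ↦ hu hij)

theorem limsup_atTop_le_iInf_of_antitone (hu : Antitone u) : limsup u atTop ≤ ⨅ i, u i :=
  le_iInf fun i ↦ limsup_le_of_le (h := (eventually_ge_atTop i).mono fun _ hij ↦ hu hij)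

end CompleteLattice

section DiagApprox

variable {α : Type*} {F G : ℕ → ℕ → Set α} {n : ℕ} {x : α}

/-- The `n`-th diagonal approximation to `⋃ i, lim n, F i n` and `⋂ k, lim n, G k n`, for use when
these sets coincide. The condition on `G` only involves `k ≤ i` so that it is eventually satisfied,
for a fixed `i`, by every point of the second set. -/
def diagApprox (F G : ℕ → ℕ → Set α) (n : ℕ) : Set α :=
  ⋃ i ∈ Iic n, F i n ∩ ⋂ k ∈ Iic i, G k n

theorem mem_diagApprox :
    x ∈ diagApprox F G n ↔ ∃ i ≤ n, x ∈ F i n ∧ ∀ k ≤ i, x ∈ G k n := by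
  simp [diagApprox, and_left_comm]

theorem diagApprox_mem_of_isSublattice {𝒜 : Set (Set α)} (h𝒜 : IsSublattice 𝒜)
    (hF : ∀ i, F i n ∈ 𝒜) (hG : ∀ k, G k n ∈ 𝒜) : diagApprox F G n ∈ 𝒜 :=
  h𝒜.supClosed.biSup_mem_of_nonempty (finite_Iic n) nonempty_Iic fun i _ ↦
    h𝒜.infClosed (hF i) <|
      h𝒜.infClosed.biInf_mem_of_nonempty (finite_Iic i) nonempty_Iic fun k _ ↦ hG k

theorem inter_subset_liminf_diagApprox :
    (⋃ i, liminf (F i) atTop) ∩ ⋂ k, liminf (G k) atTop ⊆ liminf (diagApprox F G) atTop := by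
  rintro x ⟨hxF, hxG⟩
  simp only [mem_iUnion, mem_iInter, mem_liminf_iff_eventually_mem] at hxF hxG ⊢
  obtain ⟨i, hi⟩ := hxF
  have hG : ∀ᶠ n in atTop, ∀ k ∈ Iic i, x ∈ G k n :=
    (finite_Iic i).eventually_all.2 fun k _ ↦ hxG k
  filter_upwards [eventually_ge_atTop i, hi, hG] with n hin hF hG
  exact mem_diagApprox.2 ⟨i, hin, hF, hG⟩

theorem limsup_diagApprox_subset_union :
    limsup (diagApprox F G) atTop ⊆ (⋃ i, limsup (F i) atTop) ∪ ⋂ k, limsup (G k) atTop := by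
  intro x hx
  by_contra hxFG
  simp only [mem_union, mem_iUnion, mem_iInter, mem_limsup_iff_frequently_mem, not_or, not_exists,
    not_forall, not_frequently] at hxFG hx
  obtain ⟨hxF, k, hk⟩ := hxFG
  have hF : ∀ᶠ n in atTop, ∀ i ∈ Iio k, x ∉ F i n :=
    (finite_Iio k).eventually_all.2 fun i _ ↦ hxF i
  refine hx ?_
  filter_upwards [hF, hk] with n hF hG hmem
  obtain ⟨i, -, hiF, hiG⟩ := mem_diagApprox.1 hmem
  exact (lt_or_ge i k).elim (fun hik ↦ hF i hik hiF) fun hki ↦ hG (hiG k hki)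

end DiagApprox

section PartialUnions

variable {α : Type*} {X Y : ℕ → ℕ → Set α}

theorem inter_subset_liminf_diagApprox_dissipate_accumulate :
    (⋃ i, ⋂ j, X i j) ∩ ⋂ i, ⋃ j, Y i j ⊆
      liminf (diagApprox (fun i ↦ dissipate (X i)) fun k ↦ accumulate (Y k)) atTop := by
  refine Subset.trans (inter_subset_inter ?_ ?_) inter_subset_liminf_diagApprox
  · exact iUnion_mono fun i ↦ iInter_dissipate.ge.trans iInf_le_liminf
  · exact iInter_mono fun k ↦
      iUnion_accumulate.ge.trans (iSup_le_liminf_atTop_of_monotone monotone_accumulate)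

theorem limsup_diagApprox_dissipate_accumulate_subset_union :
    limsup (diagApprox (fun i ↦ dissipate (X i)) fun k ↦ accumulate (Y k)) atTop ⊆
      (⋃ i, ⋂ j, X i j) ∪ ⋂ i, ⋃ j, Y i j := by
  refine limsup_diagApprox_subset_union.trans (union_subset_union ?_ ?_)
  · exact iUnion_mono fun i ↦
      (limsup_atTop_le_iInf_of_antitone antitone_dissipate).trans iInter_dissipate.le
  · exact iInter_mono fun k ↦ limsup_le_iSup.trans iUnion_accumulate.le

end PartialUnions

theorem isSublattice_setOf_isClopen (α : Type*) [TopologicalSpace α] :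
    IsSublattice {s : Set α | IsClopen s} :=
  ⟨fun _ hs _ ht ↦ hs.union ht, fun _ hs _ ht ↦ hs.inter ht⟩

theorem single_clopen_family_general {α : Type*} {𝒜 : Set (Set α)} (h𝒜 : IsSublattice 𝒜)
    {S : Set α} {X Y : ℕ → ℕ → Set α} (hX : ∀ i j, X i j ∈ 𝒜) (hY : ∀ i j, Y i j ∈ 𝒜)
    (h₁ : S = ⋃ i, ⋂ j, X i j) (h₂ : S = ⋂ i, ⋃ j, Y i j) :
    ∃ Z : ℕ → ℕ → Set α, (∀ i j, Z i j ∈ 𝒜) ∧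
      S = ⋃ i, ⋂ j, Z i j ∧ S = ⋂ i, ⋃ j, Z i j := by
  let C : ℕ → Set α := diagApprox (fun i ↦ dissipate (X i)) fun k ↦ accumulate (Y k)
  have hC (n : ℕ) : C n ∈ 𝒜 := diagApprox_mem_of_isSublattice h𝒜
    (fun i ↦ h𝒜.infClosed.biInf_mem_of_nonempty (finite_Iic n) nonempty_Iic fun j _ ↦ hX i j)
    (fun k ↦ h𝒜.supClosed.biSup_mem_of_nonempty (finite_Iic n) nonempty_Iic fun j _ ↦ hY k j)
  have h_liminf : S ⊆ liminf C atTop := by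
    simpa only [← h₁, ← h₂, inter_self] using
      inter_subset_liminf_diagApprox_dissipate_accumulate (X := X) (Y := Y)
  have h_limsup : limsup C atTop ⊆ S := by
    simpa only [← h₁, ← h₂, union_self] using
      limsup_diagApprox_dissipate_accumulate_subset_union (X := X) (Y := Y)
  have h_le : liminf C atTop ⊆ limsup C atTop := liminf_le_limsup
  refine ⟨fun i j ↦ C (j + i), fun i j ↦ hC (j + i), ?_, ?_⟩
  · exact (h_liminf.antisymm (h_le.trans h_limsup)).trans liminf_eq_iSup_iInf_of_nat'
  · exact ((h_liminf.trans h_le).antisymm h_limsup).trans limsup_eq_iInf_iSup_of_nat'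

/-- If `S` is both a countable union of countable intersections of clopen sets and a
countable intersection of countable unions of clopen sets, then a single family of clopen
sets realizes both forms. -/
theorem single_clopen_family (S : Set (ℕ → ℕ))
    (X Y : ℕ → ℕ → Set (ℕ → ℕ))
    (hX : ∀ i j, IsClopen (X i j)) (hY : ∀ i j, IsClopen (Y i j))
    (h₁ : S = ⋃ i, ⋂ j, X i j) (h₂ : S = ⋂ i, ⋃ j, Y i j) :
    ∃ Z : ℕ → ℕ → Set (ℕ → ℕ), (∀ i j, IsClopen (Z i j)) ∧
      S = ⋃ i, ⋂ j, Z i j ∧ S = ⋂ i, ⋃ j, Z i j :=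
  single_clopen_family_general (isSublattice_setOf_isClopen _) hX hY h₁ h₂
end

section
/- Let S be a subset of Baire space ℕ^ℕ. Suppose there are families (X_{i,j})_{i,j∈ℕ} and (Y_{i,j})_{i,j∈ℕ} of subsets of ℕ^ℕ, each of which is both Fσ and Gδ, such that S = ⋃_{i∈ℕ} ⋂_{j∈ℕ} X_{i,j} and S = ⋂_{i∈ℕ} ⋃_{j∈ℕ} Y_{i,j}. Then there is a single family (Z_{i,j})_{i,j∈ℕ} of subsets of ℕ^ℕ, each of which is both Fσ and Gδ, such that S = ⋃_{i∈ℕ} ⋂_{j∈ℕ} Z_{i,j} = ⋂_{i∈ℕ} ⋃_{j∈ℕ} Z_{i,j}. (This is the n = 2 case of the paper's final Corollary, with Δ⁰₂ sets rendered as sets that are both Fσ and Gδ.) -/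
/-!
Replacing `Y` by finite meets of finite joins, and `X` by finite joins of finite meets, we may
assume that `Y k s` decreases in `k` and increases in `s`, and that `X k s` increases in `k` and
decreases in `s`. Every term of the diagonal sequence `A s = ⨆ i ≤ s, X i s ⊓ Y i s` then satisfies
`X k s ⊓ Y k s ≤ A s ≤ X k s ⊔ Y k s`, the lower bound as soon as `k ≤ s`. Letting `s` and then `k`
tend to infinity, `A` converges to `S`, and the two formulas for `S` in terms of `Z i j = A (j + i)`
are the formulas for the limit inferior and the limit superior.
-/

open Filter

section Lattice

variable {α ι κ : Type*}

theorem exists_antitone_monotone_iInf_iSup_eq [Order.Frame α] [Preorder ι]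
    [LocallyFiniteOrderBot ι] [Preorder κ] [LocallyFiniteOrderBot κ] [IsDirectedOrder κ]
    [Nonempty κ] (L : Sublattice α) {Y : ι → κ → α} (hY : ∀ i j, Y i j ∈ L) :
    ∃ V : ι → κ → α, (∀ i j, V i j ∈ L) ∧ Antitone V ∧ (∀ i, Monotone (V i)) ∧
      ⨅ i, ⨆ j, V i j = ⨅ i, ⨆ j, Y i j := by
  refine ⟨fun k s => (Finset.Iic k).inf' Finset.nonempty_Iic fun i => partialSups (Y i) s,
    fun k s => ?_, fun k l hkl s => ?_, fun k s t hst => ?_, ?_⟩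
  · refine L.infClosed.finsetInf'_mem _ fun i _ => ?_
    rw [partialSups_apply]
    exact L.supClosed.finsetSup'_mem _ fun j _ => hY i j
  · exact Finset.inf'_mono _ (Finset.Iic_subset_Iic.2 hkl) _
  · exact Finset.inf'_mono_fun fun i _ => (partialSups (Y i)).monotone hst
  · have iSup_inf' (k : ι) :
        ⨆ s, (Finset.Iic k).inf' Finset.nonempty_Iic (fun i => partialSups (Y i) s) =
          ⨅ i ≤ k, ⨆ j, Y i j :=
      calc
        _ = ⨆ s, ⨅ i ≤ k, partialSups (Y i) s := by
          simp only [Finset.inf'_eq_inf, Finset.inf_eq_iInf, Finset.mem_Iic]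
        _ = ⨅ i ≤ k, ⨆ s, partialSups (Y i) s :=
          (Set.finite_Iic k).iSup_biInf_of_monotone fun i _ => (partialSups (Y i)).monotone
        _ = ⨅ i ≤ k, ⨆ j, Y i j := by simp only [iSup_partialSups_eq]
    simp only [iSup_inf', biInf_le_eq_iInf]

theorem exists_monotone_antitone_iSup_iInf_eq [Order.Coframe α] [Preorder ι]
    [LocallyFiniteOrderBot ι] [Preorder κ] [LocallyFiniteOrderBot κ] [IsDirectedOrder κ]
    [Nonempty κ] (L : Sublattice α) {X : ι → κ → α} (hX : ∀ i j, X i j ∈ L) :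
    ∃ U : ι → κ → α, (∀ i j, U i j ∈ L) ∧ Monotone U ∧ (∀ i, Antitone (U i)) ∧
      ⨆ i, ⨅ j, U i j = ⨆ i, ⨅ j, X i j := by
  let Ldual : Sublattice αᵒᵈ := ⟨OrderDual.ofDual ⁻¹' L, L.infClosed.dual, L.supClosed.dual⟩
  obtain ⟨U, hUL, hU, hU', h⟩ := exists_antitone_monotone_iInf_iSup_eq (α := αᵒᵈ) Ldual hX
  exact ⟨U, hUL, hU, hU', h⟩

/-- The diagonal sequence of finite joins `⨆ i ≤ s, U i s ⊓ V i s`, which interpolates between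
`⨆ i, ⨅ j, U i j` and `⨅ i, ⨆ j, V i j`. -/
def diagonalSup [Lattice α] [Preorder ι] [LocallyFiniteOrderBot ι] (U V : ι → ι → α) (s : ι) : α :=
  (Finset.Iic s).sup' Finset.nonempty_Iic fun i => U i s ⊓ V i s

theorem diagonalSup_mem [Lattice α] [Preorder ι] [LocallyFiniteOrderBot ι] (L : Sublattice α)
    {U V : ι → ι → α} (hU : ∀ i j, U i j ∈ L) (hV : ∀ i j, V i j ∈ L) (s : ι) :
    diagonalSup U V s ∈ L :=
  L.supClosed.finsetSup'_mem _ fun i _ => L.infClosed (hU i s) (hV i s)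

theorem inf_le_diagonalSup [Lattice α] [Preorder ι] [LocallyFiniteOrderBot ι] (U V : ι → ι → α)
    {k s : ι} (hks : k ≤ s) : U k s ⊓ V k s ≤ diagonalSup U V s :=
  Finset.le_sup' (fun i => U i s ⊓ V i s) (Finset.mem_Iic.2 hks)

theorem diagonalSup_le_sup [Lattice α] [LinearOrder ι] [LocallyFiniteOrderBot ι] {U V : ι → ι → α}
    (hU : Monotone U) (hV : Antitone V) (k s : ι) : diagonalSup U V s ≤ U k s ⊔ V k s := by
  refine Finset.sup'_le _ _ fun i _ => ?_
  rcases le_total i k with hik | hki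
  · exact inf_le_left.trans ((hU hik s).trans le_sup_left)
  · exact inf_le_right.trans ((hV hki s).trans le_sup_right)

theorem le_liminf_diagonalSup [Order.Frame α] [Preorder ι] [LocallyFiniteOrderBot ι]
    {U V : ι → ι → α} (hV : ∀ i, Monotone (V i)) :
    (⨆ i, ⨅ j, U i j) ⊓ (⨅ i, ⨆ j, V i j) ≤ liminf (diagonalSup U V) atTop := by
  rw [iSup_inf_eq]
  refine iSup_le fun k => (inf_le_inf_left _ (iInf_le _ k)).trans ?_
  rw [inf_iSup_eq]
  refine iSup_le fun s => le_liminf_of_le (h := ?_)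
  filter_upwards [eventually_ge_atTop k, eventually_ge_atTop s] with t hkt hst
  exact (inf_le_inf (iInf_le _ t) (hV k hst)).trans (inf_le_diagonalSup U V hkt)

theorem limsup_diagonalSup_le [Order.Coframe α] [LinearOrder ι] [LocallyFiniteOrderBot ι]
    {U V : ι → ι → α} (hU : Monotone U) (hU' : ∀ i, Antitone (U i)) (hV : Antitone V) :
    limsup (diagonalSup U V) atTop ≤ (⨆ i, ⨅ j, U i j) ⊔ ⨅ i, ⨆ j, V i j := by
  rw [sup_iInf_eq]
  refine le_iInf fun k => le_trans ?_ (sup_le_sup_right (le_iSup _ k) _)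
  rw [iInf_sup_eq]
  refine le_iInf fun s => limsup_le_of_le (h := ?_)
  filter_upwards [eventually_ge_atTop s] with t hst
  exact (diagonalSup_le_sup hU hV k t).trans (sup_le_sup (hU' k hst) (le_iSup _ t))

theorem exists_liminf_eq_limsup_eq [CompleteDistribLattice α] (L : Sublattice α) {S : α}
    {X Y : ℕ → ℕ → α} (hX : ∀ i j, X i j ∈ L) (hY : ∀ i j, Y i j ∈ L)
    (hSX : S = ⨆ i, ⨅ j, X i j) (hSY : S = ⨅ i, ⨆ j, Y i j) :
    ∃ A : ℕ → α, (∀ s, A s ∈ L) ∧ liminf A atTop = S ∧ limsup A atTop = S := by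
  obtain ⟨U, hUL, hU, hU', hUX⟩ := exists_monotone_antitone_iSup_iInf_eq L hX
  obtain ⟨V, hVL, hV, hV', hVY⟩ := exists_antitone_monotone_iInf_iSup_eq L hY
  have le_liminf : S ≤ liminf (diagonalSup U V) atTop := by
    simpa only [hUX, hVY, ← hSX, ← hSY, inf_idem] using le_liminf_diagonalSup (U := U) hV'
  have limsup_le : limsup (diagonalSup U V) atTop ≤ S := by
    simpa only [hUX, hVY, ← hSX, ← hSY, sup_idem] using limsup_diagonalSup_le hU hU' hV
  have liminf_le : liminf (diagonalSup U V) atTop ≤ limsup (diagonalSup U V) atTop :=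
    liminf_le_limsup
  exact ⟨diagonalSup U V, diagonalSup_mem L hUL hVL,
    (liminf_le.trans limsup_le).antisymm le_liminf, limsup_le.antisymm (le_liminf.trans liminf_le)⟩

theorem single_fsgd_family_general [CompleteDistribLattice α] (L : Sublattice α) (S : α)
    (X Y : ℕ → ℕ → α) (hX : ∀ i j, X i j ∈ L) (hY : ∀ i j, Y i j ∈ L)
    (h₁ : S = ⨆ i, ⨅ j, X i j) (h₂ : S = ⨅ i, ⨆ j, Y i j) :
    ∃ Z : ℕ → ℕ → α, (∀ i j, Z i j ∈ L) ∧ S = ⨆ i, ⨅ j, Z i j ∧ S = ⨅ i, ⨆ j, Z i j := by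
  obtain ⟨A, hA, h_liminf, h_limsup⟩ := exists_liminf_eq_limsup_eq L hX hY h₁ h₂
  exact ⟨fun i j => A (j + i), fun i j => hA (j + i),
    h_liminf.symm.trans liminf_eq_iSup_iInf_of_nat',
    h_limsup.symm.trans limsup_eq_iInf_iSup_of_nat'⟩

end Lattice

theorem isFsigmaGdelta_iff {A : Set (ℕ → ℕ)} : IsFsigmaGdelta A ↔ IsGδ Aᶜ ∧ IsGδ A := by
  have isGδ_compl_iff :
      IsGδ Aᶜ ↔ ∃ F : ℕ → Set (ℕ → ℕ), (∀ n, IsClosed (F n)) ∧ A = ⋃ n, F n := by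
    rw [isGδ_iff_eq_iInter_nat, compl_surjective.comp_left.exists]
    simp only [Function.comp_apply, isOpen_compl_iff, ← Set.compl_iUnion, compl_inj_iff]
  rw [isGδ_compl_iff, isGδ_iff_eq_iInter_nat, IsFsigmaGdelta]

/-- The sets that are both Fσ and Gδ, i.e. the class Δ⁰₂ of Baire space, as a sublattice of the
power set. -/
def fsigmaGdeltaSublattice : Sublattice (Set (ℕ → ℕ)) where
  carrier := {A | IsFsigmaGdelta A}
  supClosed' := by
    simp only [SupClosed, Set.mem_ofPred_eq, isFsigmaGdelta_iff, Set.sup_eq_union, Set.compl_union]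
    exact fun A hA B hB => ⟨hA.1.inter hB.1, hA.2.union hB.2⟩
  infClosed' := by
    simp only [InfClosed, Set.mem_ofPred_eq, isFsigmaGdelta_iff, Set.inf_eq_inter, Set.compl_inter]
    exact fun A hA B hB => ⟨hA.1.union hB.1, hA.2.inter hB.2⟩

/-- If `S` is both a countable union of countable intersections and a countable
intersection of countable unions of sets that are both Fσ and Gδ, then a single such
family realizes both forms. -/
theorem single_fsgd_family (S : Set (ℕ → ℕ))
    (X Y : ℕ → ℕ → Set (ℕ → ℕ))
    (hX : ∀ i j, IsFsigmaGdelta (X i j)) (hY : ∀ i j, IsFsigmaGdelta (Y i j))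
    (h₁ : S = ⋃ i, ⋂ j, X i j) (h₂ : S = ⋂ i, ⋃ j, Y i j) :
    ∃ Z : ℕ → ℕ → Set (ℕ → ℕ), (∀ i j, IsFsigmaGdelta (Z i j)) ∧
      S = ⋃ i, ⋂ j, Z i j ∧ S = ⋂ i, ⋃ j, Z i j :=
  single_fsgd_family_general fsigmaGdeltaSublattice S X Y hX hY h₁ h₂
end
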